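/- Let G be a finite group, let (σ_j)_{j∈J} be a complete family of irreducibles for G, let k ≥ 1, let ρ be a unitary representation of G^k on a finite-dimensional complex inner product space V, and let M ⊆ G be a conjugacy class of involutions with representative m₀. Then for every b ∈ V, (1/|M|) Σ_{m∈M} ‖Π_m b‖⁴ = 4^{-k} Σ_{I₁ ⊆ {1,…,k}} Σ_{I₂ ⊆ {1,…,k}} E^{I₁,I₂}(b), where Π_m = 2^{-k} Σ_{I ⊆ {1,…,k}} ρ(m^I). -/

import Mathlib

noncomputable section

open scoped BigOperators InnerProductSpace

def IsUnitaryRep {G V : Type*} [Group G] [NormedAddCommGroup V] [InnerProductSpace ℂ V]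
    (ρ : Representation ℂ G V) : Prop :=
  ∀ (g : G) (v w : V), ⟪ρ g v, ρ g w⟫_ℂ = ⟪v, w⟫_ℂ

def IsIrreducibleRep {G V : Type*} [Group G] [AddCommGroup V] [Module ℂ V]
    (ρ : Representation ℂ G V) : Prop :=
  (∃ v : V, v ≠ 0) ∧
    ∀ W : Submodule ℂ V, (∀ (g : G) (v : V), v ∈ W → ρ g v ∈ W) → W = ⊥ ∨ W = ⊤

def RepIso {G V₁ V₂ : Type*} [Group G] [AddCommGroup V₁] [Module ℂ V₁]
    [AddCommGroup V₂] [Module ℂ V₂]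
    (ρ₁ : Representation ℂ G V₁) (ρ₂ : Representation ℂ G V₂) : Prop :=
  ∃ e : V₁ ≃ₗ[ℂ] V₂, ∀ (g : G) (v : V₁), e (ρ₁ g v) = ρ₂ g (e v)

def repChar {G V : Type*} [Group G] [AddCommGroup V] [Module ℂ V]
    (ρ : Representation ℂ G V) (g : G) : ℂ := LinearMap.trace ℂ V (ρ g)

def IsCompleteFamily {G : Type*} [Group G] {J : Type*}
    (W : J → Type*) [∀ j, NormedAddCommGroup (W j)] [∀ j, InnerProductSpace ℂ (W j)]
    [∀ j, FiniteDimensional ℂ (W j)]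
    (σ : ∀ j, Representation ℂ G (W j)) : Prop :=
  (∀ j, IsUnitaryRep (σ j)) ∧ (∀ j, IsIrreducibleRep (σ j)) ∧
    (∀ j j', j ≠ j' → ¬ RepIso (σ j) (σ j')) ∧
    (∀ (U : Type) [AddCommGroup U] [Module ℂ U] [FiniteDimensional ℂ U]
      (τ : Representation ℂ G U), IsIrreducibleRep τ → ∃ j, RepIso τ (σ j))

def isoProj {G V : Type*} [Group G] [Fintype G] [AddCommGroup V] [Module ℂ V]
    (d : ℕ) (χ : G → ℂ) (ρ : Representation ℂ G V) : V →ₗ[ℂ] V :=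
  ((d : ℂ) / (Fintype.card G : ℂ)) • ∑ g : G, starRingEnd ℂ (χ g) • (ρ g : V →ₗ[ℂ] V)

def onI {G : Type*} [One G] {k : ℕ} (g : G) (I : Finset (Fin k)) : Fin k → G :=
  fun i => if i ∈ I then g else 1

def invProj {G V : Type*} [Group G] [AddCommGroup V] [Module ℂ V] {k : ℕ}
    (ρ : Representation ℂ (Fin k → G) V) (m : G) : V →ₗ[ℂ] V :=
  ((2 : ℂ) ^ k)⁻¹ • ∑ I : Finset (Fin k), (ρ (onI m I) : V →ₗ[ℂ] V)

def isoProjI {G V : Type*} [Group G] [Fintype G] [AddCommGroup V] [Module ℂ V] {k : ℕ}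
    (ρ : Representation ℂ (Fin k → G) V) (d : ℕ) (χ : G → ℂ) (I : Finset (Fin k)) :
    V →ₗ[ℂ] V :=
  ((d : ℂ) / (Fintype.card G : ℂ)) • ∑ g : G, starRingEnd ℂ (χ g) • (ρ (onI g I) : V →ₗ[ℂ] V)

/-!
Each `E^{I₁,I₂}` is a class average. The `j`-th term of its defining sum carries the weight
`χ_j(m₀)`, and column orthogonality says that `∑ j, χ_j(m₀) * conj (χ_j(g))` is `|G| / |M|` times
the indicator of `M`; so `E^{I₁,I₂}(b)` is the mean over `m ∈ M` of
`⟪b, ρ(m^{I₁}) b⟫ * conj ⟪b, ρ(m^{I₂}) b⟫`. On the other side, the `m^I` form an elementary abelian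
`2`-group indexed by subsets under symmetric difference, so `Π_m` is the orthogonal projection onto
its fixed vectors, `‖Π_m b‖² = ⟪b, Π_m b⟫`, and squaring this expands `‖Π_m b‖⁴` into the same
double sum.

Column orthogonality rests on completeness of the characters. A class function orthogonal to all of
them gives a central element of the group algebra with trace zero on every irreducible; by Schur's
lemma it annihilates every simple module, so it lies in the Jacobson radical, which vanishes by
Maschke's theorem.
-/

section GroupAlgebra

open Representation
open scoped MonoidAlgebra

theorem sum_single_mem_center {k G : Type*} [CommSemiring k] [Group G] [Fintype G] {f : G → k}
    (hf : ∀ g h, f (h * g * h⁻¹) = f g) :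
    ∑ g, MonoidAlgebra.single g (f g) ∈ Subalgebra.center k k[G] := by
  rw [Subalgebra.mem_center_iff]
  intro b
  induction b using MonoidAlgebra.induction_linear with
  | zero => simp
  | add x y hx hy => rw [add_mul, mul_add, hx, hy]
  | single h c =>
    simp only [Finset.mul_sum, Finset.sum_mul, MonoidAlgebra.single_mul_single]
    rw [← Equiv.sum_comp (MulAut.conj h).toEquiv fun g ↦ MonoidAlgebra.single (g * h) (f g * c)]
    simp [hf, mul_comm]

theorem asAlgebraHom_eq_zero_of_mem_center_of_trace_eq_zero {k G V : Type*} [Field k]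
    [IsAlgClosed k] [CharZero k] [Monoid G] [AddCommGroup V] [Module k V] [FiniteDimensional k V]
    (τ : Representation k G V) [τ.IsIrreducible] {a : k[G]} (ha : a ∈ Subalgebra.center k k[G])
    (htr : LinearMap.trace k V (τ.asAlgebraHom a) = 0) : τ.asAlgebraHom a = 0 := by
  have hcomm (g : G) (v : V) : τ.asAlgebraHom a (τ g v) = τ g (τ.asAlgebraHom a v) := by
    simp only [← asAlgebraHom_single_one, ← Module.End.mul_apply, ← map_mul]
    rw [Subalgebra.mem_center_iff.1 ha]
  obtain ⟨c, hc⟩ := IsIrreducible.algebraMap_intertwiningMap_bijective_of_isAlgClosed.2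
    ((τ.asAlgebraHom a).intertwiningMap_of_isIntertwiningMap τ τ hcomm)
  have hscalar : τ.asAlgebraHom a = c • LinearMap.id :=
    LinearMap.ext fun v ↦ (DFunLike.congr_fun hc v).symm
  rw [hscalar, map_smul, LinearMap.trace_id, smul_eq_mul, mul_eq_zero, Nat.cast_eq_zero,
    Module.finrank_eq_zero_iff_of_free] at htr
  obtain rfl | _ := htr
  · rw [hscalar, zero_smul]
  · exact Subsingleton.elim _ _

universe u v w

theorem smul_eq_zero_of_forall_isIrreducible_asAlgebraHom_eq_zero {k : Type u} {G : Type v}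
    {S : Type w} [Field k] [Group G] [Finite G] [AddCommGroup S] [Module k[G] S]
    [IsSimpleModule k[G] S] {a : k[G]}
    (h : ∀ (U : Type w) [AddCommGroup U] [Module k U] [FiniteDimensional k U]
      (τ : Representation k G U) [τ.IsIrreducible], τ.asAlgebraHom a = 0) (x : S) : a • x = 0 := by
  let _ : Module k S := Module.restrictScalars k k[G] S
  have : IsScalarTower k k[G] S := .restrictScalars k k[G] S
  have : Module.Finite k k[G] := .of_basis (MonoidAlgebra.basis G k)
  have : FiniteDimensional k S := Module.Finite.trans k[G] S
  have : (ofModule' (k := k) (G := G) S).IsIrreducible :=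
    (isSimpleModule_iff_irreducible_ofModule S).1 ‹_›
  have hx := DFunLike.congr_fun (h S (ofModule' S)) x
  simpa [ofModule', asAlgebraHom] using hx

theorem eq_zero_of_forall_isIrreducible_asAlgebraHom_eq_zero {k : Type u} {G : Type v} [Field k]
    [Group G] [Finite G] [NeZero (Nat.card G : k)] {a : k[G]}
    (h : ∀ (U : Type (max u v)) [AddCommGroup U] [Module k U] [FiniteDimensional k U]
      (τ : Representation k G U) [τ.IsIrreducible], τ.asAlgebraHom a = 0) : a = 0 := by
  suffices a ∈ Ring.jacobson k[G] by simpa [IsSemisimpleRing.jacobson_eq_bot] using this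
  refine Submodule.mem_sInf.2 fun I hI ↦ ?_
  have : IsSimpleModule k[G] (k[G] ⧸ I) := isSimpleModule_iff_isCoatom.2 hI
  have hmk : a • I.mkQ 1 = 0 := smul_eq_zero_of_forall_isIrreducible_asAlgebraHom_eq_zero h _
  rwa [← map_smul, smul_eq_mul, mul_one, Submodule.mkQ_apply, Submodule.Quotient.mk_eq_zero] at hmk

end GroupAlgebra

section Representation

variable {G V V₁ V₂ : Type*} [Group G] [AddCommGroup V] [Module ℂ V]
  [AddCommGroup V₁] [Module ℂ V₁] [AddCommGroup V₂] [Module ℂ V₂]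

theorem isIrreducibleRep_iff_isIrreducible {ρ : Representation ℂ G V} :
    IsIrreducibleRep ρ ↔ ρ.IsIrreducible := by
  constructor
  · rintro ⟨⟨v, hv⟩, hsub⟩
    have : Nontrivial (Subrepresentation ρ) :=
      ⟨⊤, ⊥, fun h ↦ hv ((Submodule.mem_bot ℂ).1 (h.le (Submodule.mem_top (x := v))))⟩
    exact ⟨fun W ↦ (hsub W.toSubmodule W.apply_mem_toSubmodule).imp
      (fun h ↦ Subrepresentation.toSubmodule_injective h)
      (fun h ↦ Subrepresentation.toSubmodule_injective h)⟩
  · intro _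
    refine ⟨?_, fun W hW ↦ (eq_bot_or_eq_top (⟨W, hW⟩ : Subrepresentation ρ)).imp
      (congrArg Subrepresentation.toSubmodule) (congrArg Subrepresentation.toSubmodule)⟩
    by_contra! hV
    refine bot_ne_top (α := Subrepresentation ρ) (Subrepresentation.toSubmodule_injective ?_)
    ext v
    simp [hV v]

theorem repIso_iff_nonempty_equiv {ρ₁ : Representation ℂ G V₁} {ρ₂ : Representation ℂ G V₂} :
    RepIso ρ₁ ρ₂ ↔ Nonempty (ρ₁.Equiv ρ₂) :=
  ⟨fun ⟨e, he⟩ ↦ ⟨.mk e fun g ↦ LinearMap.ext (he g)⟩,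
    fun ⟨e⟩ ↦ ⟨e.toLinearEquiv, fun g ↦ DFunLike.congr_fun (e.isIntertwining' g)⟩⟩

theorem repChar_eq_character (ρ : Representation ℂ G V) : repChar ρ = ρ.character := rfl

theorem RepIso.trans {V₃ : Type*} [AddCommGroup V₃] [Module ℂ V₃]
    {ρ₁ : Representation ℂ G V₁} {ρ₂ : Representation ℂ G V₂} {ρ₃ : Representation ℂ G V₃} :
    RepIso ρ₁ ρ₂ → RepIso ρ₂ ρ₃ → RepIso ρ₁ ρ₃ :=
  fun ⟨e, he⟩ ⟨f, hf⟩ ↦ ⟨e.trans f, fun g v ↦ by simp [he, hf]⟩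

theorem RepIso.isIrreducibleRep {ρ₁ : Representation ℂ G V₁} {ρ₂ : Representation ℂ G V₂}
    (h : RepIso ρ₁ ρ₂) (hρ₁ : IsIrreducibleRep ρ₁) : IsIrreducibleRep ρ₂ := by
  obtain ⟨e, he⟩ := h
  obtain ⟨⟨v, hv⟩, hsub⟩ := hρ₁
  refine ⟨⟨e v, e.map_ne_zero_iff.2 hv⟩, fun W hW ↦ ?_⟩
  let comap : Submodule ℂ V₂ ≃o Submodule ℂ V₁ := (Submodule.orderIsoMapComap e).symm
  have hcomap : comap W = ⊥ ∨ comap W = ⊤ := hsub _ fun g v hv ↦ by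
    simpa [comap, he] using hW g _ hv
  exact hcomap.imp (map_eq_bot_iff comap).1 (map_eq_top_iff comap).1

theorem exists_repIso_fin [FiniteDimensional ℂ V] (ρ : Representation ℂ G V) :
    ∃ ρ' : Representation ℂ G (Fin (Module.finrank ℂ V) → ℂ), RepIso ρ ρ' :=
  let e := (Module.finBasis ℂ V).equivFun
  ⟨(e.conjRingEquiv : Module.End ℂ V →* _).comp ρ, e, fun g v ↦ by simp⟩

theorem IsUnitaryRep.conj_repChar {V : Type*} [NormedAddCommGroup V] [InnerProductSpace ℂ V]
    [FiniteDimensional ℂ V] {ρ : Representation ℂ G V} (hρ : IsUnitaryRep ρ) (g : G) :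
    starRingEnd ℂ (repChar ρ g) = repChar ρ g⁻¹ := by
  simp only [repChar, LinearMap.trace_eq_sum_inner _ (stdOrthonormalBasis ℂ V), map_sum,
    inner_conj_symm]
  refine Finset.sum_congr rfl fun i _ ↦ ?_
  rw [← hρ g _ (ρ g⁻¹ _), Representation.self_inv_apply]

end Representation

namespace IsCompleteFamily

variable {G J : Type*} [Group G] {W : J → Type*} [∀ j, NormedAddCommGroup (W j)]
  [∀ j, InnerProductSpace ℂ (W j)] [∀ j, FiniteDimensional ℂ (W j)]
  {σ : ∀ j, Representation ℂ G (W j)}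

theorem isIrreducible (hσ : IsCompleteFamily W σ) (j : J) : (σ j).IsIrreducible :=
  isIrreducibleRep_iff_isIrreducible.1 (hσ.2.1 j)

theorem finrank_pos (hσ : IsCompleteFamily W σ) (j : J) : 0 < Module.finrank ℂ (W j) :=
  have ⟨v, hv⟩ := (hσ.2.1 j).1
  Module.finrank_pos_iff_exists_ne_zero.2 ⟨v, hv⟩

theorem exists_repIso (hσ : IsCompleteFamily W σ) {U : Type*} [AddCommGroup U] [Module ℂ U]
    [FiniteDimensional ℂ U] {τ : Representation ℂ G U} (hτ : IsIrreducibleRep τ) :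
    ∃ j, RepIso τ (σ j) := by
  -- `IsCompleteFamily` only tests representations on spaces in `Type`, hence the transport to `ℂⁿ`.
  obtain ⟨τ', hττ'⟩ := exists_repIso_fin τ
  obtain ⟨j, hj⟩ := hσ.2.2.2 _ τ' (hττ'.isIrreducibleRep hτ)
  exact ⟨j, hττ'.trans hj⟩

variable [Fintype G]

theorem sum_conj_repChar_mul_repChar [DecidableEq J] (hσ : IsCompleteFamily W σ) (i j : J) :
    ∑ g, starRingEnd ℂ (repChar (σ i) g) * repChar (σ j) g =
      if i = j then (Fintype.card G : ℂ) else 0 := by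
  have := hσ.isIrreducible
  have hcard : (Nat.card G : ℂ) ≠ 0 := Nat.cast_ne_zero.2 Nat.card_pos.ne'
  have := invertibleOfNonzero hcard
  have horth := Representation.char_orthonormal (σ j) (σ i)
  have hiso : Nonempty ((σ i).Equiv (σ j)) ↔ i = j := by
    rw [← repIso_iff_nonempty_equiv]
    refine ⟨fun h ↦ of_not_not fun hij ↦ hσ.2.2.1 i j hij h, ?_⟩
    rintro rfl
    exact repIso_iff_nonempty_equiv.2 ⟨.refl _⟩
  rw [inv_mul_eq_iff_eq_mul₀ hcard, Nat.card_eq_fintype_card] at horth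
  simp only [hiso, mul_ite, mul_one, mul_zero] at horth
  simp only [(hσ.1 i).conj_repChar]
  simpa only [repChar_eq_character, mul_comm] using horth

theorem eq_zero_of_sum_mul_repChar_eq_zero (hσ : IsCompleteFamily W σ) {f : G → ℂ}
    (hf : ∀ g h, f (h * g * h⁻¹) = f g) (hsum : ∀ j, ∑ g, f g * repChar (σ j) g = 0) : f = 0 := by
  have ha : ∑ g, MonoidAlgebra.single g (f g) = 0 := by
    refine eq_zero_of_forall_isIrreducible_asAlgebraHom_eq_zero fun U _ _ _ τ _ ↦ ?_
    refine asAlgebraHom_eq_zero_of_mem_center_of_trace_eq_zero τ (sum_single_mem_center hf) ?_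
    obtain ⟨j, hj⟩ := hσ.exists_repIso (isIrreducibleRep_iff_isIrreducible.2 ‹τ.IsIrreducible›)
    obtain ⟨e⟩ := repIso_iff_nonempty_equiv.1 hj
    calc LinearMap.trace ℂ U (τ.asAlgebraHom (∑ g, MonoidAlgebra.single g (f g)))
      _ = ∑ g, f g * τ.character g := by simp [Representation.character]
      _ = ∑ g, f g * repChar (σ j) g := by rw [Representation.char_iso e, repChar_eq_character]
      _ = 0 := hsum j
  classical
  ext x
  simpa [Finsupp.single_apply] using congrArg (fun a ↦ a.coeff x) ha

variable [Fintype J]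

theorem sum_sum_mul_repChar_mul_conj_repChar (hσ : IsCompleteFamily W σ) {f : G → ℂ}
    (hf : ∀ g h, f (h * g * h⁻¹) = f g) (x : G) :
    ∑ j, (∑ g, f g * repChar (σ j) g) * starRingEnd ℂ (repChar (σ j) x) =
      Fintype.card G * f x := by
  classical
  let F (x : G) : ℂ := ∑ j, (∑ g, f g * repChar (σ j) g) * starRingEnd ℂ (repChar (σ j) x) -
      Fintype.card G * f x
  suffices F = 0 from sub_eq_zero.1 (congrFun this x)
  refine hσ.eq_zero_of_sum_mul_repChar_eq_zero (fun g h ↦ ?_) fun i ↦ ?_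
  · simp only [F, hf, repChar_eq_character, Representation.char_conj]
  calc ∑ x, F x * repChar (σ i) x
    _ = ∑ j, (∑ g, f g * repChar (σ j) g) *
          (∑ x, starRingEnd ℂ (repChar (σ j) x) * repChar (σ i) x) -
        Fintype.card G * ∑ x, f x * repChar (σ i) x := by
      simp only [F, sub_mul, Finset.sum_sub_distrib, Finset.sum_mul _ _ (repChar (σ i) _),
        Finset.mul_sum (a := (Fintype.card G : ℂ)), mul_assoc]
      rw [Finset.sum_comm]
      simp only [Finset.mul_sum]
    _ = 0 := by
      rw [sub_eq_zero]
      simp [hσ.sum_conj_repChar_mul_repChar, mul_comm (Fintype.card G : ℂ)]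

theorem sum_repChar_mul_conj_repChar [DecidableEq G] (hσ : IsCompleteFamily W σ) {M : Finset G}
    {m₀ : G} (hM : ∀ m, m ∈ M ↔ IsConj m₀ m) (x : G) :
    (M.card : ℂ) * ∑ j, repChar (σ j) m₀ * starRingEnd ℂ (repChar (σ j) x) =
      if x ∈ M then (Fintype.card G : ℂ) else 0 := by
  have hindicator (g h : G) :
      (if h * g * h⁻¹ ∈ M then (1 : ℂ) else 0) = if g ∈ M then 1 else 0 := by
    have hconj : IsConj g (h * g * h⁻¹) := isConj_iff.2 ⟨h, rfl⟩
    simp only [hM, show IsConj m₀ (h * g * h⁻¹) ↔ IsConj m₀ g from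
      ⟨fun h ↦ h.trans hconj.symm, fun h ↦ h.trans hconj⟩]
  have hcoeff (j : J) : ∑ g, (if g ∈ M then (1 : ℂ) else 0) * repChar (σ j) g =
      M.card * repChar (σ j) m₀ := by
    have hconst : ∀ g ∈ M, repChar (σ j) g = repChar (σ j) m₀ := fun g hg ↦ by
      obtain ⟨h, rfl⟩ := isConj_iff.1 ((hM g).1 hg)
      exact (σ j).char_conj m₀ h
    simp [Finset.sum_congr rfl hconst]
  calc M.card * ∑ j, repChar (σ j) m₀ * starRingEnd ℂ (repChar (σ j) x)
    _ = ∑ j, (∑ g, (if g ∈ M then (1 : ℂ) else 0) * repChar (σ j) g) *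
          starRingEnd ℂ (repChar (σ j) x) := by simp only [hcoeff, mul_assoc, ← Finset.mul_sum]
    _ = Fintype.card G * (if x ∈ M then 1 else 0) :=
      hσ.sum_sum_mul_repChar_mul_conj_repChar (f := fun g ↦ if g ∈ M then 1 else 0) hindicator x
    _ = if x ∈ M then (Fintype.card G : ℂ) else 0 := by simp

theorem sum_repChar_div_finrank_mul_eq_average (hσ : IsCompleteFamily W σ) {M : Finset G}
    {m₀ : G} (hM : ∀ m, m ∈ M ↔ IsConj m₀ m) (F : G → ℂ) :
    ∑ j, repChar (σ j) m₀ / (Module.finrank ℂ (W j) : ℂ) *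
        ((Module.finrank ℂ (W j) : ℂ) / (Fintype.card G : ℂ) *
          ∑ g, starRingEnd ℂ (repChar (σ j) g) * F g) =
      1 / (M.card : ℂ) * ∑ m ∈ M, F m := by
  classical
  have hG : (Fintype.card G : ℂ) ≠ 0 := Nat.cast_ne_zero.2 Fintype.card_ne_zero
  have hMcard : (M.card : ℂ) ≠ 0 :=
    Nat.cast_ne_zero.2 (Finset.card_ne_zero_of_mem ((hM m₀).2 (IsConj.refl m₀)))
  have hd (j : J) : (Module.finrank ℂ (W j) : ℂ) ≠ 0 := Nat.cast_ne_zero.2 (hσ.finrank_pos j).ne'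
  have horth (g : G) : ∑ j, repChar (σ j) m₀ * starRingEnd ℂ (repChar (σ j) g) =
      (if g ∈ M then (Fintype.card G : ℂ) else 0) / M.card := by
    rw [eq_div_iff hMcard, mul_comm, hσ.sum_repChar_mul_conj_repChar hM]
  calc _ = ∑ j, repChar (σ j) m₀ * (∑ g, starRingEnd ℂ (repChar (σ j) g) * F g) / Fintype.card G :=
        Finset.sum_congr rfl fun j _ ↦ by field_simp [hd j]
    _ = ∑ g, (∑ j, repChar (σ j) m₀ * starRingEnd ℂ (repChar (σ j) g)) * F g / Fintype.card G := by
      simp only [Finset.mul_sum, Finset.sum_mul, Finset.sum_div, mul_assoc]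
      exact Finset.sum_comm
    _ = ∑ g, if g ∈ M then F g / M.card else 0 := by
      refine Finset.sum_congr rfl fun g _ ↦ ?_
      rw [horth]
      split_ifs
      · field_simp
      · simp
    _ = 1 / M.card * ∑ m ∈ M, F m := by
      rw [Finset.sum_ite_mem, Finset.univ_inter, Finset.mul_sum]
      simp only [one_div_mul_eq_div]

end IsCompleteFamily

section InvolutionProjection

variable {G : Type*} {k : ℕ}

theorem onI_mul_onI_of_mul_self [MulOneClass G] {m : G} (hm : m * m = 1) (I₁ I₂ : Finset (Fin k)) :
    onI m I₁ * onI m I₂ = onI m (symmDiff I₁ I₂) := by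
  ext i
  by_cases h₁ : i ∈ I₁ <;> by_cases h₂ : i ∈ I₂ <;> simp [onI, Finset.mem_symmDiff, h₁, h₂, hm]

variable [Group G]

theorem apply_onI_invProj {V : Type*} [AddCommGroup V] [Module ℂ V]
    (ρ : Representation ℂ (Fin k → G) V) {m : G} (hm : m * m = 1) (I : Finset (Fin k)) (b : V) :
    ρ (onI m I) (invProj ρ m b) = invProj ρ m b := by
  have hreindex : ∑ I', ρ (onI m (symmDiff I I')) b = ∑ I', ρ (onI m I') b :=
    Equiv.sum_comp (symmDiff_right_involutive I).toPerm fun I' ↦ ρ (onI m I') b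
  simpa [invProj, ← Module.End.mul_apply, ← map_mul, onI_mul_onI_of_mul_self hm] using hreindex

theorem inner_invProj {V : Type*} [NormedAddCommGroup V] [InnerProductSpace ℂ V]
    (ρ : Representation ℂ (Fin k → G) V) (m : G) (b c : V) :
    ⟪b, invProj ρ m c⟫_ℂ = ((2 : ℂ) ^ k)⁻¹ * ∑ I, ⟪b, ρ (onI m I) c⟫_ℂ := by
  simp only [invProj, LinearMap.smul_apply, LinearMap.sum_apply, inner_smul_right, inner_sum]

namespace IsUnitaryRep

variable {V : Type*} [NormedAddCommGroup V] [InnerProductSpace ℂ V]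
  {ρ : Representation ℂ (Fin k → G) V}

theorem inner_invProj_self (hρ : IsUnitaryRep ρ) {m : G} (hm : m * m = 1) (b : V) :
    ⟪invProj ρ m b, invProj ρ m b⟫_ℂ = ⟪invProj ρ m b, b⟫_ℂ := by
  have hinner (I : Finset (Fin k)) : ⟪invProj ρ m b, ρ (onI m I) b⟫_ℂ = ⟪invProj ρ m b, b⟫_ℂ := by
    rw [← hρ (onI m I) _ b, apply_onI_invProj ρ hm]
  rw [inner_invProj, Finset.sum_congr rfl fun I _ ↦ hinner I]
  simp

theorem norm_invProj_pow_four (hρ : IsUnitaryRep ρ) {m : G} (hm : m * m = 1) (b : V) :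
    (‖invProj ρ m b‖ : ℂ) ^ 4 = ((4 : ℂ) ^ k)⁻¹ * ∑ I₁ : Finset (Fin k), ∑ I₂ : Finset (Fin k),
      ⟪b, ρ (onI m I₁) b⟫_ℂ * starRingEnd ℂ ⟪b, ρ (onI m I₂) b⟫_ℂ := by
  have hsq : (‖invProj ρ m b‖ : ℂ) ^ 2 = ⟪invProj ρ m b, b⟫_ℂ := by
    rw [← hρ.inner_invProj_self hm]
    exact (inner_self_eq_norm_sq_to_K (𝕜 := ℂ) (invProj ρ m b)).symm
  have hsq' : (‖invProj ρ m b‖ : ℂ) ^ 2 = ⟪b, invProj ρ m b⟫_ℂ := by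
    simpa using congrArg (starRingEnd ℂ) hsq
  calc (‖invProj ρ m b‖ : ℂ) ^ 4
    _ = ⟪b, invProj ρ m b⟫_ℂ * starRingEnd ℂ ⟪b, invProj ρ m b⟫_ℂ := by
      rw [inner_conj_symm, ← hsq, ← hsq']
      ring
    _ = _ := by
      simp only [inner_invProj, map_mul, map_sum, map_inv₀, map_pow, Complex.conj_ofNat]
      rw [mul_mul_mul_comm, Finset.sum_mul_sum, ← mul_inv, ← mul_pow]
      norm_num

end IsUnitaryRep

end InvolutionProjection

theorem stmt7_general {G : Type*} [Group G] [Fintype G]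
    {J : Type*} [Fintype J]
    (W : J → Type*) [∀ j, NormedAddCommGroup (W j)] [∀ j, InnerProductSpace ℂ (W j)]
    [∀ j, FiniteDimensional ℂ (W j)]
    (σ : ∀ j, Representation ℂ G (W j)) (hfam : IsCompleteFamily W σ)
    {k : ℕ} {V : Type*} [NormedAddCommGroup V] [InnerProductSpace ℂ V]
    (ρ : Representation ℂ (Fin k → G) V) (hρu : IsUnitaryRep ρ)
    (M : Finset G) (m₀ : G) (hM : ∀ m : G, m ∈ M ↔ IsConj m₀ m)
    (hinv : ∀ m ∈ M, m * m = 1) (b : V) :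
    (1 / (M.card : ℂ)) * ∑ m ∈ M, (‖invProj ρ m b‖ : ℂ) ^ 4
      = ((4 : ℂ) ^ k)⁻¹ * ∑ I₁ : Finset (Fin k), ∑ I₂ : Finset (Fin k),
          ∑ j, repChar (σ j) m₀ / (Module.finrank ℂ (W j) : ℂ) *
            ((Module.finrank ℂ (W j) : ℂ) / (Fintype.card G : ℂ) *
              ∑ g : G, starRingEnd ℂ (repChar (σ j) g) *
                (⟪b, ρ (onI g I₁) b⟫_ℂ * starRingEnd ℂ ⟪b, ρ (onI g I₂) b⟫_ℂ)) := by
  calc 1 / (M.card : ℂ) * ∑ m ∈ M, (‖invProj ρ m b‖ : ℂ) ^ 4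
    _ = 1 / (M.card : ℂ) * ∑ m ∈ M, ((4 : ℂ) ^ k)⁻¹ * ∑ I₁ : Finset (Fin k),
          ∑ I₂ : Finset (Fin k),
            ⟪b, ρ (onI m I₁) b⟫_ℂ * starRingEnd ℂ ⟪b, ρ (onI m I₂) b⟫_ℂ := by
      rw [Finset.sum_congr rfl fun m hm ↦ hρu.norm_invProj_pow_four (hinv m hm) b]
    _ = ((4 : ℂ) ^ k)⁻¹ * ∑ I₁ : Finset (Fin k), ∑ I₂ : Finset (Fin k),
          1 / (M.card : ℂ) * ∑ m ∈ M,
            ⟪b, ρ (onI m I₁) b⟫_ℂ * starRingEnd ℂ ⟪b, ρ (onI m I₂) b⟫_ℂ := by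
      simp only [← Finset.mul_sum _ _ ((4 : ℂ) ^ k)⁻¹, ← Finset.mul_sum _ _ (1 / (M.card : ℂ)),
        Finset.sum_comm (t := M)]
      rw [mul_left_comm]
    _ = _ := by simp only [hfam.sum_repChar_div_finrank_mul_eq_average hM]

/-- Multiregister second moment: the average over `m ∈ M` of `‖Π_m b‖⁴` equals
`4^{-k} Σ_{I₁,I₂⊆[k]} E^{I₁,I₂}(b)` where
`E^{I₁,I₂}(b) = Σ_j (χ_j(m₀)/d_j) (d_j/|G|) Σ_g conj(χ_j(g)) ⟪b,ρ(g^{I₁})b⟫ conj(⟪b,ρ(g^{I₂})b⟫)`. -/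
theorem stmt7 {G : Type*} [Group G] [Fintype G]
    {J : Type*} [Fintype J]
    (W : J → Type*) [∀ j, NormedAddCommGroup (W j)] [∀ j, InnerProductSpace ℂ (W j)]
    [∀ j, FiniteDimensional ℂ (W j)]
    (σ : ∀ j, Representation ℂ G (W j)) (hfam : IsCompleteFamily W σ)
    {k : ℕ} (hk : 1 ≤ k)
    {V : Type*} [NormedAddCommGroup V] [InnerProductSpace ℂ V] [FiniteDimensional ℂ V]
    (ρ : Representation ℂ (Fin k → G) V) (hρu : IsUnitaryRep ρ)
    (M : Finset G) (m₀ : G) (hm₀M : m₀ ∈ M)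
    (hM : ∀ m : G, m ∈ M ↔ IsConj m₀ m)
    (hinv : ∀ m ∈ M, m * m = 1 ∧ m ≠ 1)
    (b : V) :
    (1 / (M.card : ℂ)) * ∑ m ∈ M, (‖invProj ρ m b‖ : ℂ) ^ 4
      = ((4 : ℂ) ^ k)⁻¹ * ∑ I₁ : Finset (Fin k), ∑ I₂ : Finset (Fin k),
          ∑ j, repChar (σ j) m₀ / (Module.finrank ℂ (W j) : ℂ) *
            ((Module.finrank ℂ (W j) : ℂ) / (Fintype.card G : ℂ) *
              ∑ g : G, starRingEnd ℂ (repChar (σ j) g) *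
                (⟪b, ρ (onI g I₁) b⟫_ℂ * starRingEnd ℂ ⟪b, ρ (onI g I₂) b⟫_ℂ)) :=
  stmt7_general W σ hfam ρ hρu M m₀ hM (fun m hm ↦ (hinv m hm).1) b
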